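/- For every τ ∈ ℍ and every z in a sufficiently small neighborhood of 0 one has ∑_{n≥0} (−1)^n V_{2n}(q) (πz)^{2n}/(2n)! = exp(∑_{n≥1} (4ⁿ − 1) B_{2n} E_{2n}(τ) (2πiz)^{2n} / (2n·(2n)!)). -/

import Mathlib

/-!
The numerators of `V_{2n}(q)` are the moments of the weights `(-1)^j q^{j(3j+1)/2}` at the points
`6j + 1`, so the generating function of the `V_{2n}` is a quotient of theta series. The quintuple
product rewrites it as `Θ(2z) / Θ(z)`, where `Θ(z)` is the product
`∏ (1 - z²/n²) ∏ (1 - e^{2πiz} qⁿ) (1 - e^{-2πiz} qⁿ) / (1 - qⁿ)²`. In the logarithm of `Θ(z)` the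
coefficient of `(2πiz)^{2n} / (2n (2n)!)` is `B_{2n} E_{2n}(τ)`: the sine product contributes
`B_{2n}`, through `ζ(2n)`, and the Lambert series of the remaining factors contributes the divisor
sums. Passing from `z` to `2z` multiplies this coefficient by `4ⁿ`.
-/

open Complex Filter
open scoped Real

noncomputable section

/-- `q = e^{2πiτ}`. -/
def qq (τ : ℂ) : ℂ := Complex.exp (2 * (π : ℂ) * Complex.I * τ)

/-- The normalized Eisenstein series `E_{2k}(τ) = 1 − (4k/B_{2k}) ∑_{n≥1} σ_{2k−1}(n) qⁿ`. -/
def Eser (k : ℕ) (τ : ℂ) : ℂ :=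
  1 - (4 * k / ((bernoulli (2 * k) : ℚ) : ℂ)) *
    ∑' n : ℕ, ((ArithmeticFunction.sigma (2 * k - 1)) (n + 1) : ℂ) * qq τ ^ (n + 1)

/-- Ramanujan's series `V_{2n}(q)`:
numerator `∑_{j∈ℤ} (−1)^j (6j+1)^{2n} q^{j(3j+1)/2}` divided by
denominator `∑_{j∈ℤ} (−1)^j q^{j(3j+1)/2}`. -/
def Vram (n : ℕ) (q : ℂ) : ℂ :=
  (∑' j : ℤ, (-1 : ℂ) ^ j * ((6 * j + 1 : ℤ) : ℂ) ^ (2 * n) * q ^ (j * (3 * j + 1) / 2)) /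
    (∑' j : ℤ, (-1 : ℂ) ^ j * q ^ (j * (3 * j + 1) / 2))

/-! ### The q-Pochhammer symbol -/

section QPochhammer

variable {𝕜 : Type*} [NormedField 𝕜] {q : 𝕜}

/-- The finite q-Pochhammer symbol `(a; q)_n`. -/
def qPoch (a q : 𝕜) (n : ℕ) : 𝕜 := ∏ i ∈ Finset.range n, (1 - a * q ^ i)

/-- The infinite q-Pochhammer symbol `(a; q)_∞`; it is meaningful for `‖q‖ < 1`. -/
def qPochInf (a q : 𝕜) : 𝕜 := ∏' i : ℕ, (1 - a * q ^ i)

lemma qPoch_zero (a q : 𝕜) : qPoch a q 0 = 1 := Finset.prod_range_zero _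

lemma qPoch_succ (a q : 𝕜) (n : ℕ) : qPoch a q (n + 1) = qPoch a q n * (1 - a * q ^ n) :=
  Finset.prod_range_succ _ _

lemma one_sub_mul_pow_ne_zero {a : 𝕜} (hq : ‖q‖ < 1) (ha : ‖a‖ < 1) (i : ℕ) :
    1 - a * q ^ i ≠ 0 := by
  have h : ‖a * q ^ i‖ < 1 := by
    rw [norm_mul, norm_pow]
    exact mul_lt_one_of_nonneg_of_lt_one_left (norm_nonneg a) ha
      (pow_le_one₀ (norm_nonneg q) hq.le)
  exact sub_ne_zero.mpr fun h₁ ↦ by simp [← h₁] at h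

lemma summable_norm_mul_pow (a : 𝕜) (hq : ‖q‖ < 1) : Summable fun i : ℕ ↦ ‖a * q ^ i‖ := by
  simpa only [norm_mul] using (summable_norm_geometric_of_norm_lt_one hq).mul_left ‖a‖

lemma norm_pow_lt_one (hq : ‖q‖ < 1) {m : ℕ} (hm : m ≠ 0) : ‖q ^ m‖ < 1 := by
  rw [norm_pow]
  exact pow_lt_one₀ (norm_nonneg q) hq hm

variable [CompleteSpace 𝕜]

lemma multipliable_qPochInf (a : 𝕜) (hq : ‖q‖ < 1) : Multipliable fun i : ℕ ↦ 1 - a * q ^ i := by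
  simpa only [sub_eq_add_neg] using multipliable_one_add_of_summable
    (f := fun i : ℕ ↦ -(a * q ^ i)) (by simpa only [norm_neg] using summable_norm_mul_pow a hq)

lemma hasProd_qPochInf (a : 𝕜) (hq : ‖q‖ < 1) :
    HasProd (fun i : ℕ ↦ 1 - a * q ^ i) (qPochInf a q) :=
  (multipliable_qPochInf a hq).hasProd

lemma tendsto_qPoch (a : 𝕜) (hq : ‖q‖ < 1) : Tendsto (qPoch a q) atTop (nhds (qPochInf a q)) :=
  (hasProd_qPochInf a hq).tendsto_prod_nat

lemma qPochInf_ne_zero {a : 𝕜} (hq : ‖q‖ < 1) (ha : ‖a‖ < 1) : qPochInf a q ≠ 0 := by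
  simpa only [qPochInf, sub_eq_add_neg] using tprod_one_add_ne_zero_of_summable
    (f := fun i : ℕ ↦ -(a * q ^ i))
    (by simpa only [sub_eq_add_neg] using one_sub_mul_pow_ne_zero hq ha)
    (by simpa only [norm_neg] using summable_norm_mul_pow a hq)

lemma qPochInf_eq_one_sub_mul (a : 𝕜) (hq : ‖q‖ < 1) :
    qPochInf a q = (1 - a) * qPochInf (a * q) q := by
  have hm : Multipliable fun i : ℕ ↦ 1 - a * q ^ (i + 1) := by
    simpa only [pow_succ', mul_assoc] using multipliable_qPochInf (a * q) hq
  rw [qPochInf, tprod_eq_zero_mul' (f := fun i : ℕ ↦ 1 - a * q ^ i) hm, pow_zero, mul_one]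
  simp only [qPochInf, pow_succ', mul_assoc]

lemma prod_qPochInf_mul_pow (a : 𝕜) (hq : ‖q‖ < 1) (m : ℕ) [NeZero m] :
    ∏ r : Fin m, qPochInf (a * q ^ (r : ℕ)) (q ^ m) = qPochInf a q := by
  have h (r : Fin m) (i : ℕ) : a * q ^ (r : ℕ) * (q ^ m) ^ i = a * q ^ (i * m + r) := by ring
  have hfib (r : Fin m) : HasProd (fun i : ℕ ↦ 1 - a * q ^ (i * m + r))
      (qPochInf (a * q ^ (r : ℕ)) (q ^ m)) := by
    simpa only [h] using hasProd_qPochInf (a * q ^ (r : ℕ)) (norm_pow_lt_one hq (NeZero.ne m))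
  have htot := ((Equiv.prodComm (Fin m) ℕ).trans (Nat.divModEquiv m).symm).hasProd_iff.mpr
    (hasProd_qPochInf a hq)
  exact (hasProd_fintype _).unique (htot.prod_fiberwise hfib)

lemma qPochInf_mul_qPochInf_neg (a : 𝕜) (hq : ‖q‖ < 1) :
    qPochInf a q * qPochInf (-a) q = qPochInf (a ^ 2) (q ^ 2) := by
  rw [qPochInf, qPochInf,
    ← (multipliable_qPochInf a hq).tprod_mul (multipliable_qPochInf (-a) hq), qPochInf]
  congr! 2 with i
  ring

end QPochhammer

/-! ### Jacobi's triple product -/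

section TripleProduct

lemma two_mul_mul_pred_ediv_two (k : ℤ) : 2 * (k * (k - 1) / 2) = k * (k - 1) :=
  Int.mul_ediv_cancel' (Int.even_mul_pred_self k).two_dvd

variable {𝕜 : Type*} [NormedField 𝕜] {q x : 𝕜}

/-- The general term `(-1)^k q^{k(k-1)/2} x^k` of the theta series. -/
def thetaTerm (q x : 𝕜) (k : ℤ) : 𝕜 := (-1) ^ k * q ^ (k * (k - 1) / 2) * x ^ k

/-- The theta series of base `q` at `x`, normalized so that it vanishes at `x = 1`. -/
def theta (q x : 𝕜) : 𝕜 := ∑' k : ℤ, thetaTerm q x k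

lemma thetaTerm_zero (q x : 𝕜) : thetaTerm q x 0 = 1 := by simp [thetaTerm]

lemma thetaTerm_ne_zero (hq₀ : q ≠ 0) (hx : x ≠ 0) (k : ℤ) : thetaTerm q x k ≠ 0 := by
  simp [thetaTerm, zpow_ne_zero, hq₀, hx]

lemma thetaTerm_add (hq₀ : q ≠ 0) (hx : x ≠ 0) (j m : ℤ) :
    thetaTerm q x (j + m) = thetaTerm q x m * thetaTerm q (x * q ^ m) j := by
  have h : (j + m) * (j + m - 1) / 2 = m * (m - 1) / 2 + j * (j - 1) / 2 + m * j := by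
    linarith [two_mul_mul_pred_ediv_two (j + m), two_mul_mul_pred_ediv_two j,
      two_mul_mul_pred_ediv_two m]
  simp only [thetaTerm, h, mul_zpow, zpow_mul, zpow_add₀ hq₀, zpow_add₀ hx,
    zpow_add₀ (neg_ne_zero.mpr (one_ne_zero (α := 𝕜)))]
  ring

lemma thetaTerm_add_one (hq₀ : q ≠ 0) (hx : x ≠ 0) (k : ℤ) :
    thetaTerm q x (k + 1) = -(x * q ^ k) * thetaTerm q x k := by
  rw [add_comm, thetaTerm_add hq₀ hx, mul_comm]
  simp [thetaTerm]

lemma thetaTerm_inv_mul_neg (hq₀ : q ≠ 0) (x : 𝕜) (k : ℤ) :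
    thetaTerm q (x⁻¹ * q) (-k) = thetaTerm q x k := by
  have h : -k * (-k - 1) / 2 = k * (k - 1) / 2 + k := by
    linarith [two_mul_mul_pred_ediv_two (-k), two_mul_mul_pred_ediv_two k]
  have hs : ((-1 : 𝕜) ^ k)⁻¹ = (-1) ^ k := by rw [← inv_zpow, inv_neg_one]
  have hk := zpow_ne_zero k hq₀
  simp only [thetaTerm, h, zpow_neg, mul_zpow, inv_zpow, inv_inv, mul_inv, hs, zpow_add₀ hq₀]
  field_simp

lemma summable_norm_thetaTerm_natCast (hq : ‖q‖ < 1) (hq₀ : q ≠ 0) (hx : x ≠ 0) :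
    Summable fun n : ℕ ↦ ‖thetaTerm q x n‖ := by
  have hratio : Tendsto (fun n : ℕ ↦ ‖x‖ * ‖q‖ ^ n) atTop (nhds 0) := by
    simpa using (tendsto_pow_atTop_nhds_zero_of_lt_one (norm_nonneg q) hq).const_mul ‖x‖
  have hterm (n : ℕ) : ‖thetaTerm q x n‖ ≠ 0 := norm_ne_zero_iff.mpr (thetaTerm_ne_zero hq₀ hx n)
  refine summable_of_ratio_test_tendsto_lt_one one_pos (.of_forall hterm) (hratio.congr fun n ↦ ?_)
  rw [Nat.cast_succ, thetaTerm_add_one hq₀ hx, norm_norm, norm_norm, norm_mul,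
    mul_div_cancel_right₀ _ (hterm n), norm_neg, norm_mul, zpow_natCast, norm_pow]

lemma summable_norm_thetaTerm (hq : ‖q‖ < 1) (hq₀ : q ≠ 0) (hx : x ≠ 0) :
    Summable fun k : ℤ ↦ ‖thetaTerm q x k‖ := by
  refine .of_nat_of_neg (summable_norm_thetaTerm_natCast hq hq₀ hx) ?_
  have h (n : ℕ) : thetaTerm q x (-n) = thetaTerm q (x⁻¹ * q) n := by
    rw [← thetaTerm_inv_mul_neg hq₀, neg_neg]
  simpa only [h] using
    summable_norm_thetaTerm_natCast hq hq₀ (mul_ne_zero (inv_ne_zero hx) hq₀)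

lemma theta_eq_thetaTerm_mul (hq₀ : q ≠ 0) (hx : x ≠ 0) (m : ℤ) :
    theta q x = thetaTerm q x m * theta q (x * q ^ m) := by
  simp only [theta, ← tsum_mul_left, ← thetaTerm_add hq₀ hx]
  exact ((Equiv.addRight m).tsum_eq _).symm

/-- The reciprocal of `(q; q)_m`, extended by `0` to negative `m` so that its recurrence
`invQPoch_sub_one` holds for every integer. -/
def invQPoch (q : 𝕜) (m : ℤ) : 𝕜 := if m < 0 then 0 else (qPoch q q m.toNat)⁻¹

lemma invQPoch_natCast (q : 𝕜) (n : ℕ) : invQPoch q n = (qPoch q q n)⁻¹ := by simp [invQPoch]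

lemma invQPoch_of_neg (q : 𝕜) {m : ℤ} (hm : m < 0) : invQPoch q m = 0 := if_pos hm

lemma invQPoch_sub_one (hq : ‖q‖ < 1) (m : ℤ) :
    invQPoch q (m - 1) = (1 - q ^ m) * invQPoch q m := by
  obtain hm | rfl | hm := lt_trichotomy m 0
  · rw [invQPoch_of_neg q hm, invQPoch_of_neg q (by lia), mul_zero]
  · rw [invQPoch_of_neg q (by lia), zpow_zero, sub_self, zero_mul]
  · obtain ⟨n, rfl⟩ : ∃ n : ℕ, m = (n + 1 : ℕ) := ⟨(m - 1).toNat, by lia⟩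
    rw [show ((n + 1 : ℕ) : ℤ) - 1 = n by lia, invQPoch_natCast, invQPoch_natCast, qPoch_succ,
      zpow_natCast, pow_succ', mul_inv_rev,
      mul_inv_cancel_left₀ (one_sub_mul_pow_ne_zero hq hq n)]

/-- The Gaussian binomial coefficient `[M + N choose M - k]_q`, zero unless `-N ≤ k ≤ M`. -/
def centeredGaussBinom (q : 𝕜) (M N : ℕ) (k : ℤ) : 𝕜 :=
  qPoch q q (M + N) * invQPoch q (M - k) * invQPoch q (N + k)

lemma centeredGaussBinom_neg (q : 𝕜) (M N : ℕ) (k : ℤ) :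
    centeredGaussBinom q M N (-k) = centeredGaussBinom q N M k := by
  rw [centeredGaussBinom, centeredGaussBinom, add_comm M N, sub_neg_eq_add, ← sub_eq_add_neg,
    mul_right_comm]

lemma centeredGaussBinom_zero_zero (q : 𝕜) (k : ℤ) :
    centeredGaussBinom q 0 0 k = if k = 0 then 1 else 0 := by
  obtain hk | rfl | hk := lt_trichotomy k 0
  · simp [centeredGaussBinom, invQPoch_of_neg q hk, hk.ne]
  · simp [centeredGaussBinom, invQPoch, qPoch_zero]
  · simp [centeredGaussBinom, invQPoch_of_neg q (neg_lt_zero.mpr hk), hk.ne']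

lemma centeredGaussBinom_succ_left (hq : ‖q‖ < 1) (hq₀ : q ≠ 0) (M N : ℕ) (k : ℤ) :
    centeredGaussBinom q (M + 1) N k =
      centeredGaussBinom q M N k + q ^ (M + 1 - k : ℤ) * centeredGaussBinom q M N (k - 1) := by
  have hM : invQPoch q (M - k) = (1 - q ^ (M + 1 - k : ℤ)) * invQPoch q (M + 1 - k) := by
    rw [← invQPoch_sub_one hq]
    congr 1
    ring
  have hN : invQPoch q (N + (k - 1)) = (1 - q ^ (N + k : ℤ)) * invQPoch q (N + k) := by
    rw [← invQPoch_sub_one hq, add_sub_assoc]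
  have hpow : q ^ (M + 1 - k : ℤ) * q ^ (N + k : ℤ) = q * q ^ (M + N) := by
    rw [← zpow_add₀ hq₀, ← pow_succ', ← zpow_natCast]
    congr 1
    push_cast
    ring
  simp only [centeredGaussBinom, add_right_comm M 1 N, qPoch_succ, ← hpow, hM, hN,
    show (M : ℤ) - (k - 1) = M + 1 - k by ring, Nat.cast_succ]
  ring

lemma hasSum_centeredGaussBinom_succ_left (hq : ‖q‖ < 1) (hq₀ : q ≠ 0) (hx : x ≠ 0) {M N : ℕ}
    {s : 𝕜} (h : HasSum (fun k ↦ centeredGaussBinom q M N k * thetaTerm q x k) s) :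
    HasSum (fun k ↦ centeredGaussBinom q (M + 1) N k * thetaTerm q x k) (s * (1 - x * q ^ M)) := by
  have hshift := ((Equiv.subRight (1 : ℤ)).hasSum_iff.mpr h).mul_right (x * q ^ M)
  rw [mul_one_sub]
  refine (h.sub hshift).congr_fun fun k ↦ ?_
  have hterm : thetaTerm q x k = -(x * q ^ (k - 1)) * thetaTerm q x (k - 1) := by
    rw [← thetaTerm_add_one hq₀ hx, sub_add_cancel]
  have hpow : q ^ (M + 1 - k : ℤ) * q ^ (k - 1) = q ^ M := by
    rw [← zpow_add₀ hq₀, ← zpow_natCast]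
    congr 1
    ring
  simp only [Function.comp_apply, Equiv.subRight_apply, centeredGaussBinom_succ_left hq hq₀, hterm,
    ← hpow]
  ring

lemma hasSum_centeredGaussBinom_symm (hq₀ : q ≠ 0) {M N : ℕ} {s : 𝕜}
    (h : HasSum (fun k ↦ centeredGaussBinom q M N k * thetaTerm q x k) s) :
    HasSum (fun k ↦ centeredGaussBinom q N M k * thetaTerm q (x⁻¹ * q) k) s := by
  rw [← (Equiv.neg ℤ).hasSum_iff]
  simpa only [Function.comp_def, Equiv.neg_apply, centeredGaussBinom_neg,
    thetaTerm_inv_mul_neg hq₀] using h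

/-- Recentring the q-binomial theorem turns the triple product into its limit `M = N → ∞`. -/
lemma hasSum_centeredGaussBinom (hq : ‖q‖ < 1) (hq₀ : q ≠ 0) (hx : x ≠ 0) (M N : ℕ) :
    HasSum (fun k ↦ centeredGaussBinom q M N k * thetaTerm q x k)
      (qPoch x q M * qPoch (x⁻¹ * q) q N) := by
  have hx' : x⁻¹ * q ≠ 0 := mul_ne_zero (inv_ne_zero hx) hq₀
  induction N with
  | zero =>
    rw [qPoch_zero, mul_one]
    induction M with
    | zero =>
      rw [qPoch_zero]
      refine (hasSum_ite_eq (0 : ℤ) (1 : 𝕜)).congr_fun fun k ↦ ?_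
      obtain rfl | hk := eq_or_ne k 0 <;> simp [centeredGaussBinom_zero_zero, thetaTerm_zero, *]
    | succ M ih =>
      rw [qPoch_succ]
      exact hasSum_centeredGaussBinom_succ_left hq hq₀ hx ih
  | succ N ih =>
    rw [qPoch_succ, ← mul_assoc]
    have hinv : (x⁻¹ * q)⁻¹ * q = x := by field_simp
    simpa only [hinv] using hasSum_centeredGaussBinom_symm hq₀
      (hasSum_centeredGaussBinom_succ_left hq hq₀ hx' (hasSum_centeredGaussBinom_symm hq₀ ih))

variable [CompleteSpace 𝕜]

lemma exists_norm_qPoch_le (a : 𝕜) (hq : ‖q‖ < 1) : ∃ C, ∀ n, ‖qPoch a q n‖ ≤ C := by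
  obtain ⟨C, hC⟩ := (tendsto_qPoch a hq).norm.bddAbove_range
  exact ⟨C, fun n ↦ hC ⟨n, rfl⟩⟩

lemma exists_norm_invQPoch_le (hq : ‖q‖ < 1) : ∃ C, ∀ m, ‖invQPoch q m‖ ≤ C := by
  obtain ⟨C, hC⟩ := ((tendsto_qPoch q hq).inv₀ (qPochInf_ne_zero hq hq)).norm.bddAbove_range
  have hinv (n : ℕ) : ‖(qPoch q q n)⁻¹‖ ≤ C := hC ⟨n, rfl⟩
  refine ⟨C, fun m ↦ ?_⟩
  rw [invQPoch]
  split_ifs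
  · exact norm_zero.trans_le ((norm_nonneg _).trans (hinv 0))
  · exact hinv _

lemma tendsto_invQPoch (hq : ‖q‖ < 1) (c : ℤ) :
    Tendsto (fun n : ℕ ↦ invQPoch q (n + c)) atTop (nhds (qPochInf q q)⁻¹) := by
  have hshift : Tendsto (fun n : ℕ ↦ (n + c).toNat) atTop atTop :=
    tendsto_atTop.mpr fun b ↦ by
      filter_upwards [eventually_ge_atTop (b + c.natAbs)] with n hn
      lia
  refine (((tendsto_qPoch q hq).inv₀ (qPochInf_ne_zero hq hq)).comp hshift).congr' ?_
  filter_upwards [eventually_ge_atTop c.natAbs] with n hn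
  simp [invQPoch, show ¬ ((n : ℤ) + c < 0) by lia]

lemma tendsto_centeredGaussBinom (hq : ‖q‖ < 1) (k : ℤ) :
    Tendsto (fun n : ℕ ↦ centeredGaussBinom q n n k) atTop (nhds (qPochInf q q)⁻¹) := by
  have hdouble : Tendsto (fun n : ℕ ↦ n + n) atTop atTop := tendsto_id.atTop_add_atTop tendsto_id
  simpa [qPochInf_ne_zero hq hq, centeredGaussBinom, sub_eq_add_neg] using
    (((tendsto_qPoch q hq).comp hdouble).mul (tendsto_invQPoch hq (-k))).mul
      (tendsto_invQPoch hq k)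

lemma exists_norm_centeredGaussBinom_le (hq : ‖q‖ < 1) :
    ∃ C, ∀ M N k, ‖centeredGaussBinom q M N k‖ ≤ C := by
  obtain ⟨A, hA⟩ := exists_norm_qPoch_le q hq
  obtain ⟨B, hB⟩ := exists_norm_invQPoch_le hq
  have hA₀ : 0 ≤ A := (norm_nonneg _).trans (hA 0)
  have hB₀ : 0 ≤ B := (norm_nonneg _).trans (hB 0)
  refine ⟨A * B * B, fun M N k ↦ ?_⟩
  rw [centeredGaussBinom, norm_mul, norm_mul]
  gcongr
  exacts [hA _, hB _, hB _]

theorem theta_eq_qPochInf_mul (hq : ‖q‖ < 1) (hq₀ : q ≠ 0) (hx : x ≠ 0) :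
    theta q x = qPochInf q q * (qPochInf x q * qPochInf (x⁻¹ * q) q) := by
  obtain ⟨C, hC⟩ := exists_norm_centeredGaussBinom_le hq
  have hseries : Tendsto (fun n : ℕ ↦ ∑' k, centeredGaussBinom q n n k * thetaTerm q x k) atTop
      (nhds (∑' k, (qPochInf q q)⁻¹ * thetaTerm q x k)) := by
    refine tendsto_tsum_of_dominated_convergence ((summable_norm_thetaTerm hq hq₀ hx).mul_left C)
      (fun k ↦ (tendsto_centeredGaussBinom hq k).mul_const _) (.of_forall fun n k ↦ ?_)
    rw [norm_mul]
    gcongr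
    exact hC n n k
  have hprod := ((tendsto_qPoch x hq).mul (tendsto_qPoch (x⁻¹ * q) hq)).congr
    fun n ↦ (hasSum_centeredGaussBinom hq hq₀ hx n n).tsum_eq.symm
  have hlim := tendsto_nhds_unique hprod hseries
  rw [tsum_mul_left] at hlim
  rw [hlim, mul_inv_cancel_left₀ (qPochInf_ne_zero hq hq), theta]

end TripleProduct

/-! ### The quintuple product -/

section QuintupleProduct

lemma sum_three_eq_of_hasSum_int {M : Type*} [AddCommMonoid M] [TopologicalSpace M]
    [ContinuousAdd M] [T3Space M] {f : ℤ → M} {s a b c : M} (hf : HasSum f s)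
    (h₀ : HasSum (fun k ↦ f (3 * k)) a) (h₁ : HasSum (fun k ↦ f (3 * k + 1)) b)
    (h₂ : HasSum (fun k ↦ f (3 * k + 2)) c) : a + b + c = s := by
  have hsplit := ((Equiv.prodComm (Fin 3) ℤ).trans (Int.divModEquiv 3).symm).hasSum_iff.mpr hf
  have hrow (r : Fin 3) : HasSum (fun k ↦ f (k * 3 + (r : ℕ))) (![a, b, c] r) := by
    fin_cases r <;> simpa [mul_comm _ (3 : ℤ)]
  rw [(hsplit.prod_fiberwise hrow).unique (hasSum_fintype _), Fin.sum_univ_three]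
  simp

variable {𝕜 : Type*} [NormedField 𝕜] {q x : 𝕜}

lemma thetaTerm_neg (q x : 𝕜) (k : ℤ) : thetaTerm q (-x) k = (-1) ^ k * thetaTerm q x k := by
  rw [thetaTerm, thetaTerm, neg_eq_neg_one_mul x, mul_zpow]
  ring

lemma neg_one_zpow_mul_self (k : ℤ) : (-1 : 𝕜) ^ k * (-1) ^ k = 1 := by
  rw [← mul_zpow, neg_one_mul, neg_neg, one_zpow]

lemma two_mul_mul_succ_ediv_two (k : ℤ) : 2 * (k * (k + 1) / 2) = k * (k + 1) :=
  Int.mul_ediv_cancel' (Int.even_mul_succ_self k).two_dvd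

lemma thetaTerm_zpow_zpow_mul (hq₀ : q ≠ 0) (x : 𝕜) (a b c k : ℤ) :
    thetaTerm (q ^ a) (x ^ b * q ^ c) k =
      (-1) ^ k * q ^ (a * (k * (k - 1) / 2) + c * k) * x ^ (b * k) := by
  rw [thetaTerm, mul_zpow, ← zpow_mul, ← zpow_mul, ← zpow_mul, zpow_add₀ hq₀]
  ring

lemma theta_inv_mul (hq₀ : q ≠ 0) (x : 𝕜) : theta q (x⁻¹ * q) = theta q x := by
  rw [theta, ← (Equiv.neg ℤ).tsum_eq, theta]
  simp only [Equiv.neg_apply, thetaTerm_inv_mul_neg hq₀]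

/-- The part of degree `n` in `x` of the product of the two theta series in the quintuple
product. -/
def quintupleRow (q x : 𝕜) (n : ℤ) : 𝕜 :=
  q ^ (n * (n + 1) / 2) * x ^ n * theta (q ^ 6) (q ^ (2 * n + 4))

lemma thetaTerm_mul_thetaTerm_sq (hq₀ : q ≠ 0) (hx : x ≠ 0) (n j : ℤ) :
    thetaTerm q (-(x * q)) (n - 2 * j) * thetaTerm (q ^ 2) (x ^ 2 * q) j =
      q ^ (n * (n + 1) / 2) * x ^ n * thetaTerm (q ^ 6) (q ^ (2 - 2 * n)) j := by
  have h₁ := thetaTerm_zpow_zpow_mul hq₀ x 1 1 1 (n - 2 * j)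
  have h₂ := thetaTerm_zpow_zpow_mul hq₀ x 2 2 1 j
  have h₃ := thetaTerm_zpow_zpow_mul hq₀ x 6 0 (2 - 2 * n) j
  simp only [zpow_ofNat, pow_one, pow_zero, one_mul, zero_mul, mul_one] at h₁ h₂ h₃
  have hx_pow : x ^ n = x ^ (n - 2 * j) * x ^ (2 * j) := by rw [← zpow_add₀ hx, sub_add_cancel]
  have hq_pow : q ^ (n * (n + 1) / 2) * q ^ (6 * (j * (j - 1) / 2) + (2 - 2 * n) * j) =
      q ^ ((n - 2 * j) * (n - 2 * j - 1) / 2 + (n - 2 * j)) *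
        q ^ (2 * (j * (j - 1) / 2) + j) := by
    rw [← zpow_add₀ hq₀, ← zpow_add₀ hq₀]
    congr 1
    linarith [two_mul_mul_succ_ediv_two n, two_mul_mul_pred_ediv_two j,
      two_mul_mul_pred_ediv_two (n - 2 * j)]
  rw [thetaTerm_neg, h₁, h₂, h₃, hx_pow]
  linear_combination (-1) ^ j * x ^ (n - 2 * j) * x ^ (2 * j) *
    (q ^ ((n - 2 * j) * (n - 2 * j - 1) / 2 + (n - 2 * j)) * q ^ (2 * (j * (j - 1) / 2) + j) *
      neg_one_zpow_mul_self (𝕜 := 𝕜) (n - 2 * j) - hq_pow)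

lemma quintupleRow_neg_one_sub (hq₀ : q ≠ 0) (hx : x ≠ 0) (n : ℤ) :
    quintupleRow q x (-1 - n) = x⁻¹ * quintupleRow q x⁻¹ n := by
  have hpow : q ^ (2 * (-1 - n) + 4) = (q ^ (2 * n + 4))⁻¹ * q ^ 6 := by
    rw [← zpow_neg, ← zpow_ofNat, ← zpow_add₀ hq₀]
    congr 1
    ring
  rw [quintupleRow, quintupleRow, hpow, theta_inv_mul (pow_ne_zero 6 hq₀), zpow_sub₀ hx, inv_zpow,
    zpow_neg_one, show (-1 - n) * (-1 - n + 1) = n * (n + 1) by ring]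
  ring

lemma thetaTerm_cube_mul_thetaTerm_pow_six (hq₀ : q ≠ 0) (x : 𝕜) (k : ℤ) :
    thetaTerm (q ^ 3) (x ^ 3 * q ^ 2) k * thetaTerm (q ^ 6) (q ^ 4) k =
      q ^ (3 * k * (3 * k + 1) / 2) * x ^ (3 * k) := by
  have h₁ := thetaTerm_zpow_zpow_mul hq₀ x 3 3 2 k
  have h₂ := thetaTerm_zpow_zpow_mul hq₀ x 6 0 4 k
  simp only [zpow_ofNat, pow_zero, one_mul, zero_mul, mul_one] at h₁ h₂
  have hexp : 3 * k * (3 * k + 1) / 2 =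
      3 * (k * (k - 1) / 2) + 2 * k + (6 * (k * (k - 1) / 2) + 4 * k) := by
    linarith [two_mul_mul_succ_ediv_two (3 * k), two_mul_mul_pred_ediv_two k]
  rw [h₁, h₂, hexp, zpow_add₀ hq₀ (3 * _ + _)]
  linear_combination q ^ (3 * (k * (k - 1) / 2) + 2 * k) * q ^ (6 * (k * (k - 1) / 2) + 4 * k) *
    x ^ (3 * k) * neg_one_zpow_mul_self (𝕜 := 𝕜) k

variable [CompleteSpace 𝕜]

lemma theta_one (hq : ‖q‖ < 1) (hq₀ : q ≠ 0) : theta q 1 = 0 := by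
  rw [theta_eq_qPochInf_mul hq hq₀ one_ne_zero, qPochInf_eq_one_sub_mul 1 hq]
  simp

/-- Euler's pentagonal number theorem: the three factors of the triple product of base `q ^ 3` run
over the residue classes modulo `3` in `(q; q)_∞`. -/
theorem theta_cube_sq (hq : ‖q‖ < 1) (hq₀ : q ≠ 0) : theta (q ^ 3) (q ^ 2) = qPochInf q q := by
  have hdissect := prod_qPochInf_mul_pow q hq 3
  rw [Fin.prod_univ_three] at hdissect
  have hinv : (q ^ 2)⁻¹ * q ^ 3 = q := by field_simp
  rw [theta_eq_qPochInf_mul (norm_pow_lt_one hq three_ne_zero) (pow_ne_zero 3 hq₀)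
    (pow_ne_zero 2 hq₀), hinv, ← hdissect]
  simp only [Fin.coe_ofNat_eq_mod, Nat.zero_mod, Nat.one_mod, Nat.reduceMod, pow_zero, pow_one,
    mul_one]
  rw [← sq, show q * q ^ 2 = q ^ 3 by ring]
  ring

lemma hasSum_quintupleRow (hq : ‖q‖ < 1) (hq₀ : q ≠ 0) (hx : x ≠ 0) :
    HasSum (quintupleRow q x) (theta q (-(x * q)) * theta (q ^ 2) (x ^ 2 * q)) := by
  have h₁ := summable_norm_thetaTerm hq hq₀ (neg_ne_zero.mpr (mul_ne_zero hx hq₀))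
  have h₂ := summable_norm_thetaTerm (norm_pow_lt_one hq two_ne_zero) (pow_ne_zero 2 hq₀)
    (mul_ne_zero (pow_ne_zero 2 hx) hq₀)
  have hprod := h₁.of_norm.hasSum.mul h₂.of_norm.hasSum (summable_mul_of_summable_norm h₁ h₂)
  let shear : ℤ × ℤ ≃ ℤ × ℤ := ((Equiv.prodComm ℤ ℤ).trans
    (.prodShear (.refl ℤ) fun j ↦ .subRight (2 * j))).trans (.prodComm ℤ ℤ)
  have hshear := shear.hasSum_iff.mpr hprod
  refine (hshear.prod_fiberwise fun n ↦ (hshear.summable.prod_factor n).hasSum).congr_fun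
    fun n ↦ ?_
  have hpow : (q ^ (2 * n + 4))⁻¹ * q ^ 6 = q ^ (2 - 2 * n) := by
    rw [← zpow_neg, ← zpow_ofNat, ← zpow_add₀ hq₀]
    congr 1
    ring
  rw [quintupleRow, ← theta_inv_mul (pow_ne_zero 6 hq₀), hpow, theta, ← tsum_mul_left]
  exact tsum_congr fun j ↦ (thetaTerm_mul_thetaTerm_sq hq₀ hx n j).symm

lemma quintupleRow_three_mul (hq : ‖q‖ < 1) (hq₀ : q ≠ 0) (x : 𝕜) (k : ℤ) :
    quintupleRow q x (3 * k) = qPochInf (q ^ 2) (q ^ 2) * thetaTerm (q ^ 3) (x ^ 3 * q ^ 2) k := by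
  have hpow : q ^ (2 * (3 * k) + 4) = q ^ 4 * (q ^ 6) ^ k := by
    rw [← zpow_ofNat, ← zpow_ofNat, ← zpow_mul, ← zpow_add₀ hq₀]
    congr 1
    ring
  have hpent : theta (q ^ 6) (q ^ 4) = qPochInf (q ^ 2) (q ^ 2) := by
    rw [← theta_cube_sq (norm_pow_lt_one hq two_ne_zero) (pow_ne_zero 2 hq₀), ← pow_mul, ← pow_mul]
  rw [quintupleRow, ← thetaTerm_cube_mul_thetaTerm_pow_six hq₀, hpow, mul_assoc,
    ← theta_eq_thetaTerm_mul (pow_ne_zero 6 hq₀) (pow_ne_zero 4 hq₀), hpent, mul_comm]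

lemma quintupleRow_three_mul_add_one (hq : ‖q‖ < 1) (hq₀ : q ≠ 0) (x : 𝕜) (k : ℤ) :
    quintupleRow q x (3 * k + 1) = 0 := by
  have hq₆ := pow_ne_zero 6 hq₀
  have hpow : q ^ (2 * (3 * k + 1) + 4) = 1 * (q ^ 6) ^ (k + 1) := by
    rw [one_mul, ← zpow_ofNat, ← zpow_mul]
    congr 1
    ring
  have hshift := theta_eq_thetaTerm_mul hq₆ one_ne_zero (k + 1)
  rw [theta_one (norm_pow_lt_one hq (by norm_num)) hq₆, eq_comm, mul_eq_zero,
    or_iff_right (thetaTerm_ne_zero hq₆ one_ne_zero _)] at hshift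
  rw [quintupleRow, hpow, hshift, mul_zero]

/-- The rows of degree `n ≡ 0` and `n ≡ 2` modulo `3` make up the two theta series on the right;
those of degree `n ≡ 1` vanish because `theta (q ^ 6) 1 = 0`. -/
theorem theta_mul_theta_sq (hq : ‖q‖ < 1) (hq₀ : q ≠ 0) (hx : x ≠ 0) :
    theta q (-(x * q)) * theta (q ^ 2) (x ^ 2 * q) = qPochInf (q ^ 2) (q ^ 2) *
      (theta (q ^ 3) (x ^ 3 * q ^ 2) + x⁻¹ * theta (q ^ 3) (x⁻¹ ^ 3 * q ^ 2)) := by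
  have hzero {y : 𝕜} (hy : y ≠ 0) : HasSum (fun k ↦ quintupleRow q y (3 * k))
      (qPochInf (q ^ 2) (q ^ 2) * theta (q ^ 3) (y ^ 3 * q ^ 2)) := by
    simp only [quintupleRow_three_mul hq hq₀]
    exact (summable_norm_thetaTerm (norm_pow_lt_one hq three_ne_zero) (pow_ne_zero 3 hq₀)
      (mul_ne_zero (pow_ne_zero 3 hy) (pow_ne_zero 2 hq₀))).of_norm.hasSum.mul_left _
  have hone : HasSum (fun k ↦ quintupleRow q x (3 * k + 1)) 0 := by
    simp only [quintupleRow_three_mul_add_one hq hq₀, hasSum_zero]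
  have htwo : HasSum (fun k ↦ quintupleRow q x (3 * k + 2))
      (x⁻¹ * (qPochInf (q ^ 2) (q ^ 2) * theta (q ^ 3) (x⁻¹ ^ 3 * q ^ 2))) := by
    refine ((Equiv.subLeft (-1 : ℤ)).hasSum_iff.mpr ((hzero (inv_ne_zero hx)).mul_left _)).congr_fun
      fun k ↦ ?_
    rw [Function.comp_apply, ← quintupleRow_neg_one_sub hq₀ hx, Equiv.subLeft_apply]
    congr 1
    ring
  rw [← sum_three_eq_of_hasSum_int (hasSum_quintupleRow hq hq₀ hx) (hzero hx) hone htwo]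
  ring

/-- The product `(xq; q)_∞ (x⁻¹q; q)_∞`, which is `theta q x` without its factors `1 - x` and
`(q; q)_∞`. -/
def thetaProd (q x : 𝕜) : 𝕜 := qPochInf (x * q) q * qPochInf (x⁻¹ * q) q

lemma thetaProd_mul_thetaProd_neg (hq : ‖q‖ < 1) (x : 𝕜) :
    thetaProd q x * thetaProd q (-x) =
      qPochInf (x ^ 2 * q ^ 2) (q ^ 2) * qPochInf (x⁻¹ ^ 2 * q ^ 2) (q ^ 2) := by
  rw [← mul_pow, ← mul_pow, ← qPochInf_mul_qPochInf_neg _ hq, ← qPochInf_mul_qPochInf_neg _ hq,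
    thetaProd, thetaProd, inv_neg, neg_mul, neg_mul]
  ring

lemma theta_neg_mul (hq : ‖q‖ < 1) (hq₀ : q ≠ 0) (hx : x ≠ 0) :
    theta q (-(x * q)) = qPochInf q q * (1 + x⁻¹) * thetaProd q (-x) := by
  have hinv : (-(x * q))⁻¹ * q = -x⁻¹ := by field_simp
  rw [theta_eq_qPochInf_mul hq hq₀ (neg_ne_zero.mpr (mul_ne_zero hx hq₀)), hinv,
    qPochInf_eq_one_sub_mul (-x⁻¹) hq, thetaProd, inv_neg, neg_mul, neg_mul]
  ring

lemma theta_sq_mul_thetaProd (hq : ‖q‖ < 1) (hq₀ : q ≠ 0) (hx : x ≠ 0) :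
    theta (q ^ 2) (x ^ 2 * q) * (thetaProd q x * thetaProd q (-x)) =
      qPochInf (q ^ 2) (q ^ 2) * thetaProd q (x ^ 2) := by
  have hdissect (y : 𝕜) :
      qPochInf (y ^ 2 * q) (q ^ 2) * qPochInf (y ^ 2 * q ^ 2) (q ^ 2) = qPochInf (y ^ 2 * q) q := by
    rw [← prod_qPochInf_mul_pow (y ^ 2 * q) hq 2, Fin.prod_univ_two]
    simp [sq, mul_assoc]
  have hinv : (x ^ 2 * q)⁻¹ * q ^ 2 = x⁻¹ ^ 2 * q := by field_simp
  rw [theta_eq_qPochInf_mul (norm_pow_lt_one hq two_ne_zero) (pow_ne_zero 2 hq₀)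
    (mul_ne_zero (pow_ne_zero 2 hx) hq₀), thetaProd_mul_thetaProd_neg hq, hinv, thetaProd,
    ← inv_pow, ← hdissect, ← hdissect]
  ring

theorem theta_add_theta_inv_mul_thetaProd (hq : ‖q‖ < 1) (hq₀ : q ≠ 0) (hx : x ≠ 0) :
    (theta (q ^ 3) (x ^ 3 * q ^ 2) + x⁻¹ * theta (q ^ 3) (x⁻¹ ^ 3 * q ^ 2)) * thetaProd q x =
      (1 + x⁻¹) * qPochInf q q * thetaProd q (x ^ 2) := by
  have hq₂ := norm_pow_lt_one hq two_ne_zero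
  refine mul_left_cancel₀ (qPochInf_ne_zero hq₂ hq₂) ?_
  rw [← mul_assoc, ← theta_mul_theta_sq hq hq₀ hx, theta_neg_mul hq hq₀ hx]
  linear_combination (1 + x⁻¹) * qPochInf q q * theta_sq_mul_thetaProd hq hq₀ hx

end QuintupleProduct

/-! ### Logarithms of infinite products -/

lemma hasSum_tsum_fst {ι κ E : Type*} [NormedAddCommGroup E] [CompleteSpace E] {f : ι × κ → E}
    {s : E} (hf : HasSum f s) : HasSum (fun k ↦ ∑' i, f (i, k)) s := by
  have hswap := (Equiv.prodComm κ ι).hasSum_iff.mpr hf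
  exact hswap.prod_fiberwise fun k ↦ (hswap.summable.prod_factor k).hasSum

/-- `f` sums to some logarithm of `a`. Exponentiating spares the choice of a branch. -/
def HasLogSum {ι : Type*} (f : ι → ℂ) (a : ℂ) : Prop := ∃ s, HasSum f s ∧ cexp s = a

namespace HasLogSum

variable {ι : Type*} {f g : ι → ℂ} {a b : ℂ}

lemma exp_tsum (h : HasLogSum f a) : cexp (∑' i, f i) = a := by
  obtain ⟨s, hs, rfl⟩ := h
  rw [hs.tsum_eq]

lemma hasSum (h : HasLogSum f a) : HasSum f (∑' i, f i) := by
  obtain ⟨s, hs, -⟩ := h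
  exact hs.summable.hasSum

lemma congr_fun (hf : HasLogSum f a) (hfg : ∀ i, g i = f i) : HasLogSum g a :=
  funext hfg ▸ hf

lemma ne_zero (h : HasLogSum f a) : a ≠ 0 := h.exp_tsum ▸ exp_ne_zero _

lemma mul (hf : HasLogSum f a) (hg : HasLogSum g b) : HasLogSum (fun i ↦ f i + g i) (a * b) := by
  obtain ⟨s, hs, rfl⟩ := hf
  obtain ⟨t, ht, rfl⟩ := hg
  exact ⟨s + t, hs.add ht, exp_add s t⟩

lemma div (hf : HasLogSum f a) (hg : HasLogSum g b) : HasLogSum (fun i ↦ f i - g i) (a / b) := by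
  obtain ⟨s, hs, rfl⟩ := hf
  obtain ⟨t, ht, rfl⟩ := hg
  exact ⟨s - t, hs.sub ht, exp_sub s t⟩

lemma nat_succ {f : ℕ → ℂ} (hf : HasLogSum f a) :
    HasLogSum (fun n ↦ f (n + 1)) (a / cexp (f 0)) := by
  obtain ⟨s, hs, rfl⟩ := hf
  refine ⟨s - f 0, ?_, exp_sub s (f 0)⟩
  simpa only [Finset.sum_range_one] using (hasSum_nat_add_iff' 1).mpr hs

lemma tsum_fst {ι κ : Type*} {f : ι × κ → ℂ} (hf : HasLogSum f a) :
    HasLogSum (fun k ↦ ∑' i, f (i, k)) a :=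
  hf.imp fun _ ↦ And.imp_left hasSum_tsum_fst

end HasLogSum

section LogProduct

variable {ι : Type*} {u : ι → ℂ}

lemma summable_pow_div_log (hu : Summable u) (hu₁ : ∀ i, ‖u i‖ < 1) :
    Summable fun p : ι × ℕ ↦ u p.1 ^ (p.2 + 1) / (p.2 + 1) := by
  have hrow (i : ι) : HasSum (fun m : ℕ ↦ ‖u i ^ (m + 1) / (m + 1)‖) (-Real.log (1 - ‖u i‖)) := by
    simpa [← Nat.cast_add_one, -Nat.cast_add] using
      Real.hasSum_pow_div_log_of_abs_lt_one (x := ‖u i‖) (by simpa using hu₁ i)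
  refine .of_norm ((summable_prod_of_nonneg fun p ↦ norm_nonneg _).mpr
    ⟨fun i ↦ (hrow i).summable, ?_⟩)
  simp only [(hrow _).tsum_eq]
  simpa [sub_eq_add_neg] using (Real.summable_log_one_add_of_summable hu.norm.neg).neg

theorem hasLogSum_tprod_one_sub (hu : Summable u) (hu₁ : ∀ i, ‖u i‖ < 1) :
    HasLogSum (fun p : ι × ℕ ↦ -(u p.1 ^ (p.2 + 1) / (p.2 + 1))) (∏' i, (1 - u i)) := by
  have hlog : Summable fun i ↦ log (1 - u i) := by
    simpa [sub_eq_add_neg] using summable_log_one_add_of_summable hu.neg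
  have hne (i : ι) : 1 - u i ≠ 0 := sub_ne_zero.mpr fun h ↦ by simpa [← h] using hu₁ i
  have hsum := (summable_pow_div_log hu hu₁).neg.hasSum
  have hval := hsum.prod_fiberwise fun i ↦ (hasSum_taylorSeries_neg_log' (hu₁ i)).neg
  simp only [neg_neg] at hval
  exact ⟨_, hsum, by rw [← hval.tsum_eq, cexp_tsum_eq_tprod hne hlog]⟩

end LogProduct

lemma hasSum_moment_mul_pow_of_hasSum_cosh {ι : Type*} {c : ι → ℂ} {r : ι → ℝ} {v s : ℂ}
    (habs : Summable fun i ↦ c i * Complex.cosh (r i * ‖v‖))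
    (hs : HasSum (fun i ↦ c i * Complex.cosh (r i * v)) s) :
    HasSum (fun n : ℕ ↦ (∑' i, c i * r i ^ (2 * n)) * (v ^ (2 * n) / (2 * n).factorial)) s := by
  let term (p : ι × ℕ) : ℂ := c p.1 * ((r p.1 * v) ^ (2 * p.2) / (2 * p.2).factorial)
  have hrow (i : ι) : HasSum (fun n ↦ term (i, n)) (c i * Complex.cosh (r i * v)) :=
    (hasSum_cosh _).mul_left _
  have hrow_norm (i : ι) :
      HasSum (fun n ↦ ‖term (i, n)‖) ‖c i * Complex.cosh (r i * ‖v‖)‖ := by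
    rw [← ofReal_mul, ← ofReal_cosh, norm_mul, norm_real, Real.norm_of_nonneg (Real.cosh_pos _).le]
    refine ((Real.hasSum_cosh (r i * ‖v‖)).mul_left ‖c i‖).congr_fun fun n ↦ ?_
    simp [term, mul_pow, pow_mul]
  have hterm : Summable term := .of_norm ((summable_prod_of_nonneg fun p ↦ norm_nonneg _).mpr
    ⟨fun i ↦ (hrow_norm i).summable, by simpa only [(hrow_norm _).tsum_eq] using habs.norm⟩)
  have hsum : HasSum term s := (hterm.hasSum.prod_fiberwise hrow).unique hs ▸ hterm.hasSum
  refine (hasSum_tsum_fst hsum).congr_fun fun n ↦ ?_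
  rw [← tsum_mul_right]
  refine tsum_congr fun i ↦ ?_
  simp only [term, mul_pow]
  ring

/-! ### The sine product and the Bernoulli numbers -/

section SineProduct

/-- The Euler product of `sin (π w) / (π w)`, with value `1` at `w = 0`. -/
def sinProd (w : ℂ) : ℂ := ∏' n : ℕ, (1 - w ^ 2 / (n + 1) ^ 2)

lemma pi_mul_sinProd (w : ℂ) : π * w * sinProd w = Complex.sin (π * w) := by
  have hmul : Multipliable fun n : ℕ ↦ 1 - w ^ 2 / ((n : ℂ) + 1) ^ 2 := by
    simpa only [sineTerm, neg_div, ← sub_eq_add_neg] using multipliable_sineTerm w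
  exact tendsto_nhds_unique (hmul.hasProd.tendsto_prod_nat.const_mul _)
    (tendsto_euler_sin_prod w)

lemma sinProd_two_mul (w : ℂ) : sinProd (2 * w) = Complex.cos (π * w) * sinProd w := by
  obtain rfl | hw := eq_or_ne w 0
  · simp
  have hπ : (π : ℂ) ≠ 0 := ofReal_ne_zero.mpr Real.pi_ne_zero
  have hsin := pi_mul_sinProd (2 * w)
  rw [mul_left_comm, Complex.sin_two_mul, ← pi_mul_sinProd w] at hsin
  refine mul_left_cancel₀ (mul_ne_zero two_ne_zero (mul_ne_zero hπ hw)) ?_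
  linear_combination hsin

lemma riemannZeta_two_mul_eq_tsum {k : ℕ} (hk : k ≠ 0) :
    riemannZeta (2 * k) = ∑' n : ℕ, 1 / ((n : ℂ) + 1) ^ (2 * k) := by
  have hre : 1 < ((2 * k : ℕ) : ℂ).re := by
    rw [natCast_re, Nat.one_lt_cast]
    lia
  have hzeta := zeta_eq_tsum_one_div_nat_add_one_cpow hre
  simp only [cpow_natCast] at hzeta
  exact_mod_cast hzeta

lemma bernoulli_two_mul_ne_zero {k : ℕ} (hk : k ≠ 0) : bernoulli (2 * k) ≠ 0 := by
  have hre : 1 ≤ ((2 * k : ℕ) : ℂ).re := by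
    rw [natCast_re, Nat.one_le_cast]
    lia
  intro h
  refine riemannZeta_ne_zero_of_one_le_re hre ?_
  simp [riemannZeta_two_mul_nat hk, h]

lemma neg_pow_div_mul_riemannZeta (w : ℂ) (n : ℕ) :
    -(w ^ (2 * (n + 1)) / (n + 1)) * riemannZeta (2 * (n + 1 : ℕ)) =
      (bernoulli (2 * (n + 1)) : ℚ) * (2 * π * I * w) ^ (2 * (n + 1)) /
        ((2 * (n + 1) : ℕ) * (2 * (n + 1)).factorial) := by
  have hn : (n : ℂ) + 1 ≠ 0 := n.cast_add_one_ne_zero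
  have hfac : ((2 * (n + 1)).factorial : ℂ) ≠ 0 := Nat.cast_ne_zero.mpr (Nat.factorial_ne_zero _)
  rw [riemannZeta_two_mul_nat n.add_one_ne_zero, mul_pow, mul_pow, mul_pow, pow_mul I, I_sq,
    show 2 * (n + 1) - 1 = 2 * n + 1 by lia]
  push_cast
  field_simp
  ring

theorem hasLogSum_sinProd {w : ℂ} (hw : ‖w‖ < 1) :
    HasLogSum (fun n : ℕ ↦ (bernoulli (2 * (n + 1)) : ℚ) * (2 * π * I * w) ^ (2 * (n + 1)) /
      ((2 * (n + 1) : ℕ) * (2 * (n + 1)).factorial)) (sinProd w) := by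
  have hsum : Summable fun n : ℕ ↦ w ^ 2 / ((n : ℂ) + 1) ^ 2 :=
    .of_norm ((summable_pow_div_add (w ^ 2) 2 1 Nat.one_lt_two).congr fun n ↦ by simp)
  have hlt (n : ℕ) : ‖w ^ 2 / ((n : ℂ) + 1) ^ 2‖ < 1 := by
    have hn : 1 ≤ ‖(n : ℂ) + 1‖ := by
      rw [← Nat.cast_add_one, norm_natCast]
      exact_mod_cast n.succ_pos
    rw [← div_pow, norm_pow, norm_div]
    exact pow_lt_one₀ (by positivity) ((div_lt_one (by positivity)).mpr (hw.trans_le hn))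
      two_ne_zero
  refine (hasLogSum_tprod_one_sub hsum hlt).tsum_fst.congr_fun fun n ↦ ?_
  rw [← neg_pow_div_mul_riemannZeta, riemannZeta_two_mul_eq_tsum n.add_one_ne_zero, ← tsum_mul_left]
  refine tsum_congr fun m ↦ ?_
  rw [div_pow, ← pow_mul, ← pow_mul]
  ring

end SineProduct

/-! ### Logarithms of theta functions and Eisenstein series -/

section ThetaLog

variable {q v : ℂ}

lemma hasLogSum_qPochInf {x : ℂ} (hq : ‖q‖ < 1) (hx : ‖x * q‖ < 1) :
    HasLogSum (fun p : ℕ × ℕ ↦ -(x ^ (p.2 + 1) * q ^ ((p.1 + 1) * (p.2 + 1)) / (p.2 + 1)))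
      (qPochInf (x * q) q) := by
  have hlt (n : ℕ) : ‖x * q * q ^ n‖ < 1 := by
    rw [norm_mul, norm_pow]
    exact mul_lt_one_of_nonneg_of_lt_one_left (norm_nonneg _) hx
      (pow_le_one₀ (norm_nonneg q) hq.le)
  refine (hasLogSum_tprod_one_sub (summable_norm_mul_pow (x * q) hq).of_norm hlt).congr_fun
    fun p ↦ ?_
  rw [mul_assoc, ← pow_succ', mul_pow, ← pow_mul]

/-- The coefficient of `cosh ((m + 1) v)` in the term of index `(n, m)` of the expansion of
`log (thetaProd q (exp v))`. -/
def thetaLogCoeff (q : ℂ) (p : ℕ × ℕ) : ℂ := -2 * (q ^ ((p.1 + 1) * (p.2 + 1)) / (p.2 + 1))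

lemma norm_lt_one_of_exp_norm_mul_lt_one (hv : rexp ‖v‖ * ‖q‖ < 1) : ‖q‖ < 1 :=
  (le_mul_of_one_le_left (norm_nonneg q) (Real.one_le_exp (norm_nonneg v))).trans_lt hv

lemma norm_cexp_mul_lt_one (hv : rexp ‖v‖ * ‖q‖ < 1) : ‖cexp v * q‖ < 1 := by
  rw [norm_mul]
  exact (mul_le_mul_of_nonneg_right (norm_exp_le_exp_norm v) (norm_nonneg q)).trans_lt hv

lemma hasLogSum_thetaProd_cosh (hv : rexp ‖v‖ * ‖q‖ < 1) :
    HasLogSum (fun p : ℕ × ℕ ↦ thetaLogCoeff q p * Complex.cosh ((p.2 + 1 : ℝ) * v))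
      (thetaProd q (cexp v)) := by
  have hq := norm_lt_one_of_exp_norm_mul_lt_one hv
  have hpos := hasLogSum_qPochInf hq (norm_cexp_mul_lt_one hv)
  have hneg := hasLogSum_qPochInf hq (norm_cexp_mul_lt_one (v := -v) (by rwa [norm_neg]))
  rw [thetaProd, ← exp_neg]
  refine (hpos.mul hneg).congr_fun fun p ↦ ?_
  rw [thetaLogCoeff, Complex.cosh, ← exp_nat_mul, ← exp_nat_mul]
  push_cast
  ring_nf

lemma hasLogSum_thetaProd (hv : rexp ‖v‖ * ‖q‖ < 1) :
    HasLogSum (fun k : ℕ ↦ (∑' p, thetaLogCoeff q p * (p.2 + 1 : ℝ) ^ (2 * k)) *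
      (v ^ (2 * k) / (2 * k).factorial)) (thetaProd q (cexp v)) := by
  have habs := hasLogSum_thetaProd_cosh (q := q) (v := ‖v‖) (by simpa using hv)
  have hcosh := hasLogSum_thetaProd_cosh hv
  exact ⟨_, hasSum_moment_mul_pow_of_hasSum_cosh habs.hasSum.summable hcosh.hasSum,
    hcosh.exp_tsum⟩

lemma tsum_thetaLogCoeff_mul_pow (hq : ‖q‖ < 1) (k : ℕ) :
    ∑' p, thetaLogCoeff q p * (p.2 + 1 : ℝ) ^ (2 * (k + 1)) =
      -2 * ∑' n : ℕ, (ArithmeticFunction.sigma (2 * (k + 1) - 1) (n + 1) : ℂ) * q ^ (n + 1) := by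
  rw [← tsum_pnat_eq_tsum_succ
    (f := fun n ↦ (ArithmeticFunction.sigma (2 * (k + 1) - 1) n : ℂ) * q ^ n),
    ← tsum_prod_pow_eq_tsum_sigma _ hq, ← (summable_prod_mul_pow _ hq).tsum_prod,
    ← (Equiv.pnatEquivNat.prodCongr Equiv.pnatEquivNat).tsum_eq, ← tsum_mul_left]
  refine tsum_congr fun p ↦ ?_
  have hsucc (n : ℕ+) : Equiv.pnatEquivNat n + 1 = (n : ℕ) := PNat.natPred_add_one n
  have hp : ((p.2 : ℕ) : ℂ) ≠ 0 := Nat.cast_ne_zero.mpr p.2.ne_zero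
  simp only [thetaLogCoeff, Equiv.prodCongr_apply, Prod.map_fst, Prod.map_snd,
    ofReal_natCast, ← Nat.cast_add_one, hsucc]
  rw [show 2 * (k + 1) - 1 = 2 * k + 1 by lia, show 2 * (k + 1) = 2 * k + 1 + 1 by ring]
  field_simp
  ring

theorem hasLogSum_thetaProd_div_thetaProd_one (hv : rexp ‖v‖ * ‖q‖ < 1) :
    HasLogSum (fun k : ℕ ↦
      -2 * (∑' n : ℕ, (ArithmeticFunction.sigma (2 * (k + 1) - 1) (n + 1) : ℂ) * q ^ (n + 1)) *
        (v ^ (2 * (k + 1)) / (2 * (k + 1)).factorial))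
      (thetaProd q (cexp v) / thetaProd q 1) := by
  have hq := norm_lt_one_of_exp_norm_mul_lt_one hv
  have hone := (hasLogSum_thetaProd_cosh (q := q) (v := 0) (by simpa using hq)).exp_tsum
  have hmain := (hasLogSum_thetaProd hv).nat_succ
  simp only [mul_zero, Complex.cosh_zero, mul_one, exp_zero] at hone
  simpa only [tsum_thetaLogCoeff_mul_pow hq, mul_zero, pow_zero, mul_one, Nat.factorial_zero,
    Nat.cast_one, div_one, hone] using hmain

/-- The odd Jacobi theta function of `w`, divided by its leading term at `w = 0`. -/
def normalizedTheta (q w : ℂ) : ℂ :=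
  sinProd w * (thetaProd q (cexp (2 * π * I * w)) / thetaProd q 1)

lemma norm_qq (τ : ℂ) : ‖qq τ‖ = rexp (-(2 * π * τ.im)) := by
  rw [qq, norm_exp]
  simp

lemma norm_qq_lt_one {τ : ℂ} (hτ : 0 < τ.im) : ‖qq τ‖ < 1 := by
  rw [norm_qq, Real.exp_lt_one_iff, neg_lt_zero]
  positivity

lemma exp_norm_mul_norm_qq_lt_one {τ w : ℂ} (hw : ‖w‖ < τ.im) :
    rexp ‖2 * π * I * w‖ * ‖qq τ‖ < 1 := by
  have hnorm : ‖2 * π * I * w‖ = 2 * π * ‖w‖ := by simp [Real.pi_pos.le]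
  rw [norm_qq, ← Real.exp_add, Real.exp_lt_one_iff, hnorm]
  nlinarith [Real.pi_pos]

lemma bernoulli_mul_Eser {k : ℕ} (hk : k ≠ 0) (τ : ℂ) :
    (bernoulli (2 * k) : ℚ) * Eser k τ = (bernoulli (2 * k) : ℚ) - 4 * k *
      ∑' n : ℕ, (ArithmeticFunction.sigma (2 * k - 1) (n + 1) : ℂ) * qq τ ^ (n + 1) := by
  have hB : ((bernoulli (2 * k) : ℚ) : ℂ) ≠ 0 := Rat.cast_ne_zero.mpr (bernoulli_two_mul_ne_zero hk)
  rw [Eser]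
  field_simp

theorem hasLogSum_normalizedTheta {τ w : ℂ} (hw : ‖w‖ < 1) (hwτ : ‖w‖ < τ.im) :
    HasLogSum (fun n : ℕ ↦ (bernoulli (2 * (n + 1)) : ℚ) * Eser (n + 1) τ *
      (2 * π * I * w) ^ (2 * (n + 1)) / ((2 * (n + 1) : ℕ) * (2 * (n + 1)).factorial))
      (normalizedTheta (qq τ) w) := by
  refine ((hasLogSum_sinProd hw).mul (hasLogSum_thetaProd_div_thetaProd_one
    (exp_norm_mul_norm_qq_lt_one hwτ))).congr_fun fun n ↦ ?_
  have hn : (n : ℂ) + 1 ≠ 0 := n.cast_add_one_ne_zero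
  have hfac : ((2 * (n + 1)).factorial : ℂ) ≠ 0 := Nat.cast_ne_zero.mpr (Nat.factorial_ne_zero _)
  rw [bernoulli_mul_Eser n.add_one_ne_zero]
  push_cast
  field_simp
  ring

end ThetaLog

/-! ### Ramanujan's series -/

section RamanujanSeries

variable {q : ℂ}

lemma thetaTerm_cube_sq (hq₀ : q ≠ 0) (j : ℤ) :
    thetaTerm (q ^ 3) (q ^ 2) j = (-1) ^ j * q ^ (j * (3 * j + 1) / 2) := by
  have hterm := thetaTerm_zpow_zpow_mul hq₀ 1 3 0 2 j
  simp only [zpow_ofNat, pow_zero, zero_mul, one_mul, mul_one] at hterm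
  have hexp : j * (3 * j + 1) / 2 = 3 * (j * (j - 1) / 2) + 2 * j := by
    refine Int.ediv_eq_of_eq_mul_right two_ne_zero ?_
    linarith [two_mul_mul_pred_ediv_two j]
  rw [hterm, hexp]

lemma hasSum_thetaTerm_mul_cosh (hq : ‖q‖ < 1) (hq₀ : q ≠ 0) (v : ℂ) :
    HasSum (fun j : ℤ ↦ thetaTerm (q ^ 3) (q ^ 2) j * Complex.cosh ((6 * j + 1 : ℝ) * v))
      (cexp v / 2 * (theta (q ^ 3) (cexp (2 * v) ^ 3 * q ^ 2) +
        (cexp (2 * v))⁻¹ * theta (q ^ 3) ((cexp (2 * v))⁻¹ ^ 3 * q ^ 2))) := by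
  have hsum {x : ℂ} (hx : x ≠ 0) :=
    (summable_norm_thetaTerm (norm_pow_lt_one hq three_ne_zero) (pow_ne_zero 3 hq₀)
      (mul_ne_zero (pow_ne_zero 3 hx) (pow_ne_zero 2 hq₀))).of_norm.hasSum
  have hx := exp_ne_zero (2 * v)
  refine (((hsum hx).add ((hsum (inv_ne_zero hx)).mul_left _)).mul_left _).congr_fun fun j ↦ ?_
  have hpos : cexp ((6 * j + 1 : ℝ) * v) = cexp v * (cexp (2 * v) ^ 3) ^ j := by
    rw [← exp_nat_mul, ← exp_int_mul, ← exp_add]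
    push_cast
    ring_nf
  have hneg : cexp (-((6 * j + 1 : ℝ) * v)) =
      cexp v * (cexp (2 * v))⁻¹ * ((cexp (2 * v))⁻¹ ^ 3) ^ j := by
    rw [← exp_neg, ← exp_nat_mul, ← exp_int_mul, ← exp_add, ← exp_add]
    push_cast
    ring_nf
  rw [Complex.cosh, hpos, hneg, thetaTerm, thetaTerm, thetaTerm, mul_zpow, mul_zpow]
  ring

lemma exp_div_two_mul_theta_add_theta_inv (hq : ‖q‖ < 1) (hq₀ : q ≠ 0) {v : ℂ}
    (hv : thetaProd q (cexp (2 * v)) ≠ 0) :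
    cexp v / 2 * (theta (q ^ 3) (cexp (2 * v) ^ 3 * q ^ 2) +
        (cexp (2 * v))⁻¹ * theta (q ^ 3) ((cexp (2 * v))⁻¹ ^ 3 * q ^ 2)) =
      qPochInf q q * Complex.cosh v *
        (thetaProd q (cexp (2 * (2 * v))) / thetaProd q (cexp (2 * v))) := by
  have hcosh : 2 * Complex.cosh v = cexp v * (1 + (cexp (2 * v))⁻¹) := by
    rw [two_cosh, mul_add, mul_one, ← exp_neg, ← exp_add]
    ring_nf
  have hsq : cexp (2 * (2 * v)) = cexp (2 * v) ^ 2 := by rw [← exp_nat_mul, Nat.cast_ofNat]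
  rw [hsq, ← mul_div_assoc, eq_div_iff hv]
  linear_combination cexp v / 2 *
    theta_add_theta_inv_mul_thetaProd hq hq₀ (exp_ne_zero (2 * v)) -
      qPochInf q q * thetaProd q (cexp (2 * v) ^ 2) / 2 * hcosh

lemma Vram_eq_tsum_div_qPochInf (hq : ‖q‖ < 1) (hq₀ : q ≠ 0) (n : ℕ) :
    Vram n q = (∑' j : ℤ, thetaTerm (q ^ 3) (q ^ 2) j * (6 * j + 1 : ℝ) ^ (2 * n)) /
      qPochInf q q := by
  rw [Vram, ← theta_cube_sq hq hq₀, theta]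
  simp only [thetaTerm_cube_sq hq₀]
  push_cast
  simp only [mul_right_comm]

theorem hasSum_Vram_of_thetaProd_ne_zero (hq : ‖q‖ < 1) (hq₀ : q ≠ 0) {v : ℂ}
    (hv : thetaProd q (cexp (2 * v)) ≠ 0) :
    HasSum (fun n : ℕ ↦ Vram n q * (v ^ (2 * n) / (2 * n).factorial))
      (Complex.cosh v * (thetaProd q (cexp (2 * (2 * v))) / thetaProd q (cexp (2 * v)))) := by
  have hcosh := hasSum_thetaTerm_mul_cosh hq hq₀ v
  rw [exp_div_two_mul_theta_add_theta_inv hq hq₀ hv] at hcosh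
  have hmoment := (hasSum_moment_mul_pow_of_hasSum_cosh
    (hasSum_thetaTerm_mul_cosh hq hq₀ ‖v‖).summable hcosh).div_const (qPochInf q q)
  rw [mul_assoc, mul_div_cancel_left₀ _ (qPochInf_ne_zero hq hq)] at hmoment
  refine hmoment.congr_fun fun n ↦ ?_
  rw [Vram_eq_tsum_div_qPochInf hq hq₀]
  ring

theorem hasSum_Vram (hq : ‖q‖ < 1) (hq₀ : q ≠ 0) {z : ℂ} (hz : normalizedTheta q z ≠ 0) :
    HasSum (fun n : ℕ ↦ (-1) ^ n * Vram n q * (π * z) ^ (2 * n) / (2 * n).factorial)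
      (normalizedTheta q (2 * z) / normalizedTheta q z) := by
  obtain ⟨hsin, hprod, hone⟩ :
      sinProd z ≠ 0 ∧ thetaProd q (cexp (2 * π * I * z)) ≠ 0 ∧ thetaProd q 1 ≠ 0 := by
    simpa only [normalizedTheta, ne_eq, mul_eq_zero, div_eq_zero_iff, not_or] using hz
  have hvz : 2 * (π * z * I) = 2 * π * I * z := by ring
  have hvz₂ : 2 * (2 * π * I * z) = 2 * π * I * (2 * z) := by ring
  have hsum := hasSum_Vram_of_thetaProd_ne_zero hq hq₀ (v := π * z * I) (by rwa [hvz])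
  rw [hvz, hvz₂, cosh_mul_I] at hsum
  have hval : normalizedTheta q (2 * z) / normalizedTheta q z = Complex.cos (π * z) *
      (thetaProd q (cexp (2 * π * I * (2 * z))) / thetaProd q (cexp (2 * π * I * z))) := by
    rw [normalizedTheta, normalizedTheta, sinProd_two_mul]
    field_simp
  rw [hval]
  refine hsum.congr_fun fun n ↦ ?_
  rw [mul_pow _ I, pow_mul I, I_sq]
  ring

theorem hasLogSum_normalizedTheta_two_mul_div {τ z : ℂ} (hz : 2 * ‖z‖ < 1)
    (hzτ : 2 * ‖z‖ < τ.im) :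
    HasLogSum (fun n : ℕ ↦ (4 ^ (n + 1) - 1) * (bernoulli (2 * (n + 1)) : ℚ) * Eser (n + 1) τ *
      (2 * π * I * z) ^ (2 * (n + 1)) / ((2 * (n + 1) : ℕ) * (2 * (n + 1)).factorial))
      (normalizedTheta (qq τ) (2 * z) / normalizedTheta (qq τ) z) := by
  have hnorm : ‖2 * z‖ = 2 * ‖z‖ := by rw [norm_mul, Complex.norm_ofNat]
  have hle : ‖z‖ ≤ 2 * ‖z‖ := le_mul_of_one_le_left (norm_nonneg z) one_le_two
  have hlog := hasLogSum_normalizedTheta (hle.trans_lt hz) (hle.trans_lt hzτ)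
  have hlog₂ := hasLogSum_normalizedTheta (hnorm.trans_lt hz) (hnorm.trans_lt hzτ)
  refine (hlog₂.div hlog).congr_fun fun n ↦ ?_
  have hscale : (2 * π * I * (2 * z)) ^ (2 * (n + 1)) =
      4 ^ (n + 1) * (2 * π * I * z) ^ (2 * (n + 1)) := by
    rw [show 2 * π * I * (2 * z) = 2 * (2 * π * I * z) by ring, mul_pow 2, pow_mul 2]
    norm_num
  rw [hscale]
  ring

end RamanujanSeries

/-- For every `τ ∈ ℍ` and every `z` in a sufficiently small neighborhood
of `0`,
`∑_{n≥0} (−1)^n V_{2n}(q) (πz)^{2n}/(2n)! = exp(∑_{n≥1} (4ⁿ−1)B_{2n}E_{2n}(τ)(2πiz)^{2n}/(2n·(2n)!))`. -/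
theorem V_generating_function_exp
    (τ : ℂ) (hτ : 0 < τ.im) :
    ∃ ε > 0, ∀ z : ℂ, ‖z‖ < ε →
      HasSum (fun n : ℕ =>
          (-1 : ℂ) ^ n * Vram n (qq τ) * ((π : ℂ) * z) ^ (2 * n) /
            (Nat.factorial (2 * n) : ℂ))
        (Complex.exp (∑' n : ℕ,
          ((4 : ℂ) ^ (n + 1) - 1) * ((bernoulli (2 * (n + 1)) : ℚ) : ℂ) * Eser (n + 1) τ *
            (2 * (π : ℂ) * Complex.I * z) ^ (2 * (n + 1)) /
            ((2 * (n + 1) : ℕ) * (Nat.factorial (2 * (n + 1)) : ℂ)))) := by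
  refine ⟨min 1 τ.im / 2, half_pos (lt_min one_pos hτ), fun z hz ↦ ?_⟩
  obtain ⟨hz₁, hzτ⟩ : 2 * ‖z‖ < 1 ∧ 2 * ‖z‖ < τ.im := lt_min_iff.mp (by linarith)
  have hlog := hasLogSum_normalizedTheta_two_mul_div hz₁ hzτ
  have hne : normalizedTheta (qq τ) z ≠ 0 := (div_ne_zero_iff.mp hlog.ne_zero).2
  rw [hlog.exp_tsum]
  exact hasSum_Vram (norm_qq_lt_one hτ) (exp_ne_zero _) hne
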